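/- If H is a connected subgraph of a connected finite simple graph G, then for every natural number x ≥ 1 the number of x-colorings satisfies π(G,x) ≤ π(H,x)·(x−1)^(|V(G)|−|V(H)|). -/

import Mathlib

/-!
The bound comes from an injection. Fix a root `r` in the connected vertex set of `H`. By
connectedness of `G`, every vertex `v ≠ r` has a neighbour `p v` strictly closer to `r`
(`exists_adj_dist_lt`). A proper coloring `f` of `G` is recorded by its restriction to `H` and, for
each `v` outside `H`, by the position of `f v` among the `x - 1` colors different from `f (p v)`.
Induction on the distance to `r` shows that this data determines `f`.
-/

open SimpleGraph Finset

/-- `chromPoly G x` is the number of proper `x`-colorings of the graph `G`,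
i.e. the value `π(G,x)` of the chromatic polynomial at `x`. -/
noncomputable def chromPoly {V : Type} (G : SimpleGraph V) (x : ℕ) : ℕ :=
  Nat.card {f : V → Fin x // ∀ ⦃u v : V⦄, G.Adj u v → f u ≠ f v}

/-- A neighbour of `v` closer to the root `r`: the next vertex on a geodesic from `v` to `r`. -/
lemma exists_adj_dist_lt {V : Type} {G : SimpleGraph V} (hG : G.Connected) {r v : V}
    (hv : v ≠ r) : ∃ w, G.Adj v w ∧ G.dist w r < G.dist v r := by
  obtain ⟨p, hp⟩ := hG.exists_walk_length_eq_dist v r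
  cases p with
  | nil => exact absurd rfl hv
  | cons h q =>
    refine ⟨_, h, ?_⟩
    have := SimpleGraph.dist_le q
    rw [SimpleGraph.Walk.length_cons] at hp
    omega

/-- **Proposition 2.1.** If `H` is a connected subgraph of a connected finite simple
graph `G` (i.e. `H` is a graph on a subset `s` of the vertices of `G` whose edges are
edges of `G` between vertices of `s`), then for every natural number `x ≥ 1`,
`π(G,x) ≤ π(H,x) · (x-1)^(|V(G)|-|V(H)|)`. -/
theorem statement_2 {V : Type} [Fintype V] (G : SimpleGraph V) (hG : G.Connected)
    (s : Set V) (H : SimpleGraph s) (hsub : H ≤ G.induce s) (hH : H.Connected)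
    (x : ℕ) (hx : 1 ≤ x) :
    chromPoly G x ≤ chromPoly H x * (x - 1) ^ (Fintype.card V - Nat.card s) := by
  classical
  obtain ⟨r⟩ := hH.nonempty
  obtain ⟨n, rfl⟩ : ∃ n, x = n + 1 := ⟨x - 1, by omega⟩
  choose p hp hlt using fun v : {v : V // v ∉ s} =>
    exists_adj_dist_lt hG (r := r.1) (v := v.1) (fun h => v.2 (h ▸ r.2))
  -- `Fin.succAbove c` enumerates the colors other than `c` by `Fin n`.
  choose k hk using fun (f : {f : V → Fin (n + 1) // ∀ ⦃u v : V⦄, G.Adj u v → f u ≠ f v})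
      (v : {v : V // v ∉ s}) => Fin.exists_succAbove_eq (f.2 (hp v))
  let Φ : {f : V → Fin (n + 1) // ∀ ⦃u v : V⦄, G.Adj u v → f u ≠ f v} →
      {f : s → Fin (n + 1) // ∀ ⦃u v : s⦄, H.Adj u v → f u ≠ f v} ×
        ({v : V // v ∉ s} → Fin n) :=
    fun f => (⟨fun u => f.1 u, fun _ _ h => f.2 (hsub h)⟩, k f)
  have hΦ : Function.Injective Φ := by
    intro f g hfg
    have h1 : ∀ u : s, f.1 u = g.1 u :=
      fun u => congrFun (congrArg Subtype.val (congrArg Prod.fst hfg)) u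
    have h2 : k f = k g := congrArg Prod.snd hfg
    have key : ∀ d v, G.dist v r = d → f.1 v = g.1 v := by
      intro d
      induction d using Nat.strong_induction_on with
      | _ d ih =>
        intro v hd
        by_cases hv : v ∈ s
        · exact h1 ⟨v, hv⟩
        · have h3 := ih _ (hd ▸ hlt ⟨v, hv⟩) (p ⟨v, hv⟩) rfl
          rw [← hk f ⟨v, hv⟩, ← hk g ⟨v, hv⟩, h2, h3]
    exact Subtype.ext (funext fun v => key _ v rfl)
  have hcard : Nat.card {v : V // v ∉ s} = Fintype.card V - Nat.card s := by
    rw [Nat.card_eq_fintype_card, Nat.card_eq_fintype_card]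
    exact Fintype.card_subtype_compl (· ∈ s)
  have h := Nat.card_le_card_of_injective Φ hΦ
  rw [Nat.card_prod, Nat.card_fun, hcard, Nat.card_fin] at h
  exact h
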